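/- arXiv:1909.02818 — 2 statements merged into one kernel-verified Lean document; each statement's English description precedes it below -/
import Mathlib

section
/- Let U ⊆ ℝⁿ be open, let v : ℝⁿ → ℝⁿ be a C¹ vector field, let Pe and μ be real constants, and let φ, φ† : ℝⁿ → ℝ be C² functions such that the adjoint eigenvalue equation −Pe v·∇φ† − Δφ† = μ φ† holds at every point of U. Set β := φ φ†. Then for every C² function ω : ℝⁿ → ℝ and every x ∈ U, the pointwise identity φ†(x) · div( Pe v φ ω − ∇(φ ω) )(x) = div( (Pe v φ φ† + φ ∇φ† − φ† ∇φ) ω − β ∇ω )(x) + μ β(x) ω(x) holds. (This is the key decomposition identity φ† L(φω) = L*ω + ε⁻²λ β ω of Section 3.1, with μ = ε⁻²λ and Pe v* = Pe v φφ† + φ∇φ† − φ†∇φ.) -/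
/-!
Write `F = Pe v φω − ∇(φω)`. By the product rule for gradients (`vgrad_mul`), the field on the
right-hand side is `φ† F + φω ∇φ†`. By the product rule for divergences (`vdiv_mul`), its
divergence is `φ† div F + ∇φ†·F + φω Δφ† + ∇(φω)·∇φ†`. The terms `∇(φω)·∇φ†` cancel, and what
remains besides `φ† div F` is `φω (Pe v·∇φ† + Δφ†) = −μ φφ†ω` by the adjoint equation.
-/

/-- Gradient of a scalar field on `ℝⁿ` (components w.r.t. the standard basis). -/
noncomputable def vgrad {n : ℕ} (f : (Fin n → ℝ) → ℝ) (x : Fin n → ℝ) : Fin n → ℝ :=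
  fun i => fderiv ℝ f x (Pi.single i 1)

/-- Divergence of a vector field on `ℝⁿ`: `∑ i, ∂ᵢ Fᵢ`. -/
noncomputable def vdiv {n : ℕ} (F : (Fin n → ℝ) → (Fin n → ℝ)) (x : Fin n → ℝ) : ℝ :=
  ∑ i, fderiv ℝ (fun y => F y i) x (Pi.single i 1)

theorem vgrad_mul {n : ℕ} {f g : (Fin n → ℝ) → ℝ} {x : Fin n → ℝ}
    (hf : DifferentiableAt ℝ f x) (hg : DifferentiableAt ℝ g x) (i : Fin n) :
    vgrad (fun z => f z * g z) x i = f x * vgrad g x i + g x * vgrad f x i := by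
  simp [vgrad, fderiv_fun_mul hf hg]

theorem vdiv_add {n : ℕ} {F G : (Fin n → ℝ) → (Fin n → ℝ)} {x : Fin n → ℝ}
    (hF : ∀ i, DifferentiableAt ℝ (fun y => F y i) x)
    (hG : ∀ i, DifferentiableAt ℝ (fun y => G y i) x) :
    vdiv (fun y i => F y i + G y i) x = vdiv F x + vdiv G x := by
  simp only [vdiv, ← Finset.sum_add_distrib]
  refine Finset.sum_congr rfl fun i _ => ?_
  rw [fderiv_fun_add (hF i) (hG i)]
  rfl

theorem vdiv_mul {n : ℕ} {g : (Fin n → ℝ) → ℝ} {F : (Fin n → ℝ) → (Fin n → ℝ)}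
    {x : Fin n → ℝ} (hg : DifferentiableAt ℝ g x)
    (hF : ∀ i, DifferentiableAt ℝ (fun y => F y i) x) :
    vdiv (fun y i => g y * F y i) x = g x * vdiv F x + ∑ i, F x i * vgrad g x i := by
  simp only [vdiv, vgrad, Finset.mul_sum, ← Finset.sum_add_distrib]
  refine Finset.sum_congr rfl fun i _ => ?_
  rw [fderiv_fun_mul hg (hF i)]
  simp

theorem differentiable_vgrad {n : ℕ} {f : (Fin n → ℝ) → ℝ} (hf : ContDiff ℝ 2 f) (i : Fin n) :
    Differentiable ℝ (fun y => vgrad f y i) := by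
  have h : ContDiff ℝ 1 (fderiv ℝ f) := hf.fderiv_right (by norm_num)
  exact (h.differentiable (by norm_num)).clm_apply (differentiable_const _)

/-- The key decomposition identity `φ† L(φω) = L*ω + ε⁻²λ β ω` (Section 3.1),
with `μ = ε⁻²λ` and `Pe v* = Pe v φφ† + φ∇φ† − φ†∇φ`, `β = φφ†`. -/
theorem spectral_decomposition_identity {n : ℕ}
    (U : Set (Fin n → ℝ)) (hU : IsOpen U)
    (v : (Fin n → ℝ) → (Fin n → ℝ)) (hv : ContDiff ℝ 1 v)
    (Pe μ : ℝ) (φ φd : (Fin n → ℝ) → ℝ)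
    (hφ : ContDiff ℝ 2 φ) (hφd : ContDiff ℝ 2 φd)
    (hadj : ∀ x ∈ U,
      -Pe * (∑ i, v x i * vgrad φd x i) - vdiv (vgrad φd) x = μ * φd x)
    (ω : (Fin n → ℝ) → ℝ) (hω : ContDiff ℝ 2 ω) :
    ∀ x ∈ U,
      φd x *
        vdiv (fun y i => Pe * v y i * (φ y * ω y) - vgrad (fun z => φ z * ω z) y i) x
      =
      vdiv (fun y i =>
          (Pe * v y i * (φ y * φd y) + φ y * vgrad φd y i - φd y * vgrad φ y i) * ω y
            - (φ y * φd y) * vgrad ω y i) x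
        + μ * (φ x * φd x) * ω x := by
  intro x hx
  have dφ : Differentiable ℝ φ := hφ.differentiable (by norm_num)
  have dφd : Differentiable ℝ φd := hφd.differentiable (by norm_num)
  have dω : Differentiable ℝ ω := hω.differentiable (by norm_num)
  have dv : ∀ i, Differentiable ℝ (fun y => v y i) :=
    differentiable_pi.1 (hv.differentiable (by norm_num))
  have dgφd := differentiable_vgrad hφd
  have dF : ∀ i, Differentiable ℝ
      (fun y => Pe * v y i * (φ y * ω y) - vgrad (fun z => φ z * ω z) y i) := fun i =>
    (((dv i).const_mul Pe).mul (dφ.mul dω)).sub (differentiable_vgrad (hφ.mul hω) i)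
  have key : (fun (y : Fin n → ℝ) (i : Fin n) =>
        (Pe * v y i * (φ y * φd y) + φ y * vgrad φd y i - φd y * vgrad φ y i) * ω y
          - (φ y * φd y) * vgrad ω y i)
      = fun y i => φd y * (Pe * v y i * (φ y * ω y) - vgrad (fun z => φ z * ω z) y i)
          + (φ y * ω y) * vgrad φd y i := by
    funext y i
    rw [vgrad_mul (dφ y) (dω y)]
    ring
  rw [key, vdiv_add
      (F := fun y i => φd y * (Pe * v y i * (φ y * ω y) - vgrad (fun z => φ z * ω z) y i))
      (G := fun y i => (φ y * ω y) * vgrad φd y i)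
      (fun i => (dφd x).mul (dF i x))
      (fun i => ((dφ.mul dω) x).mul (dgφd i x)),
    vdiv_mul
      (F := fun y i => Pe * v y i * (φ y * ω y) - vgrad (fun z => φ z * ω z) y i)
      (dφd x) (fun i => dF i x),
    vdiv_mul (g := fun y => φ y * ω y) (F := vgrad φd) ((dφ.mul dω) x) (fun i => dgφd i x)]
  have hsum : ∑ i, (Pe * v x i * (φ x * ω x) - vgrad (fun z => φ z * ω z) x i) * vgrad φd x i
      + ∑ i, vgrad φd x i * vgrad (fun z => φ z * ω z) x i
      = φ x * ω x * (Pe * ∑ i, v x i * vgrad φd x i) := by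
    simp only [Finset.mul_sum, ← Finset.sum_add_distrib]
    exact Finset.sum_congr rfl fun i _ => by ring
  linear_combination -hsum + φ x * ω x * hadj x hx
end

section
/- Let v : ℝⁿ → ℝⁿ be a C¹, ℤⁿ-periodic vector field with div v = 0 everywhere, let Pe be a real constant, and let φ, φ† : ℝⁿ → ℝ be C², ℤⁿ-periodic functions that are strictly positive everywhere. Suppose there are real numbers λ and λ† such that div(Pe v φ − ∇φ) = λ φ and −Pe v·∇φ† − Δφ† = λ† φ† hold at every point of ℝⁿ. Then λ = λ†: the eigenvalue of the direct advection–diffusion eigenproblem equals the eigenvalue of the adjoint eigenproblem associated with positive periodic eigenfunctions. -/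
open MeasureTheory Set

lemma contDiff_vgrad_apply {n : ℕ} {f : (Fin n → ℝ) → ℝ} (hf : ContDiff ℝ 2 f) (i : Fin n) :
    ContDiff ℝ 1 (fun x => vgrad f x i) := by
  unfold vgrad
  exact (hf.fderiv_right (m := 1) (by norm_num)).clm_apply contDiff_const

lemma vgrad_periodic {n : ℕ} {f : (Fin n → ℝ) → ℝ}
    (hf : ∀ (x : Fin n → ℝ) (z : Fin n → ℤ), f (x + fun i => (z i : ℝ)) = f x)
    (x : Fin n → ℝ) (z : Fin n → ℤ) : vgrad f (x + fun i => (z i : ℝ)) = vgrad f x := by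
  unfold vgrad
  rw [← fderiv_comp_add_right, funext fun y => hf y z]

lemma continuous_vdiv {n : ℕ} {F : (Fin n → ℝ) → (Fin n → ℝ)}
    (hF : ∀ i, ContDiff ℝ 1 (fun x => F x i)) : Continuous (vdiv F) := by
  unfold vdiv
  exact continuous_finsetSum _ fun i _ =>
    ((hF i).continuous_fderiv one_ne_zero).clm_apply continuous_const

/-- The divergence of a periodic `C¹` vector field has zero mean over the unit cell. -/
lemma integral_vdiv_eq_zero {n : ℕ} {F : (Fin n → ℝ) → (Fin n → ℝ)}
    (hF : ∀ i, ContDiff ℝ 1 (fun x => F x i))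
    (hper : ∀ (x : Fin n → ℝ) (z : Fin n → ℤ), F (x + fun i => (z i : ℝ)) = F x) :
    ∫ x in Icc (0 : Fin n → ℝ) 1, vdiv F x = 0 := by
  rcases n with _ | n
  · simp [vdiv]
  have key := integral_divergence_of_hasFDerivAt_off_countable' (0 : Fin (n + 1) → ℝ) 1
    zero_le_one (fun i x => F x i) (fun i x => fderiv ℝ (fun y => F y i) x) ∅ countable_empty
    (fun i => (hF i).continuous.continuousOn)
    (fun x _ i => ((hF i).differentiable one_ne_zero x).hasFDerivAt)
    ((continuous_vdiv hF).continuousOn.integrableOn_compact isCompact_Icc)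
  refine key.trans (Finset.sum_eq_zero fun i _ => sub_eq_zero.2 ?_)
  congr 1
  funext x
  -- The front face is the back face translated by the `i`-th basis vector.
  have hface : i.insertNth ((1 : Fin (n + 1) → ℝ) i) x =
      (i.insertNth ((0 : Fin (n + 1) → ℝ) i) x : Fin (n + 1) → ℝ) +
        fun j => (((Pi.single i 1 : Fin (n + 1) → ℤ) j : ℤ) : ℝ) := by
    funext j
    refine Fin.succAboveCases i ?_ (fun k => ?_) j <;> simp
  exact congrFun ((congrArg F hface).trans (hper _ _)) i

/-- Product rule for the combined field `g J + f ∇g`. For `J = Pe v f − ∇f` the first-order term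
`(J + ∇f)·∇g` reduces to the advective part `Pe f v·∇g`. -/
lemma vdiv_flux_mul_add {n : ℕ} {J : (Fin n → ℝ) → (Fin n → ℝ)} {f g : (Fin n → ℝ) → ℝ}
    (hJ : ∀ i, ContDiff ℝ 1 (fun x => J x i)) (hf : ContDiff ℝ 2 f) (hg : ContDiff ℝ 2 g)
    (x : Fin n → ℝ) :
    vdiv (fun y i => J y i * g y + f y * vgrad g y i) x =
      vdiv J x * g x + ∑ i, (J x i + vgrad f x i) * vgrad g x i + f x * vdiv (vgrad g) x := by
  unfold vdiv
  rw [Finset.sum_mul, Finset.mul_sum, ← Finset.sum_add_distrib, ← Finset.sum_add_distrib]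
  refine Finset.sum_congr rfl fun i _ => ?_
  have dJ := ((hJ i).differentiable one_ne_zero x).hasFDerivAt
  have df := (hf.differentiable two_ne_zero x).hasFDerivAt
  have dg := (hg.differentiable two_ne_zero x).hasFDerivAt
  have dgg := ((contDiff_vgrad_apply hg i).differentiable one_ne_zero x).hasFDerivAt
  have h := ((dJ.mul dg).add (df.mul dgg)).fderiv
  have h' := congrArg (fun L => L (Pi.single i (1 : ℝ))) h
  refine h'.trans ?_
  simp only [add_apply, smul_apply, smul_eq_mul]
  simp only [vgrad]
  ring

/-- The eigenvalue of the direct advection–diffusion eigenproblem equals the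
eigenvalue of the adjoint eigenproblem associated with positive periodic
eigenfunctions: `λ = λ†`. -/
theorem direct_adjoint_eigenvalues_equal {n : ℕ}
    (v : (Fin n → ℝ) → (Fin n → ℝ)) (hv : ContDiff ℝ 1 v)
    (hvper : ∀ (x : Fin n → ℝ) (z : Fin n → ℤ), v (x + fun i => (z i : ℝ)) = v x)
    (hdivv : ∀ x, vdiv v x = 0)
    (Pe : ℝ) (φ φd : (Fin n → ℝ) → ℝ)
    (hφ : ContDiff ℝ 2 φ) (hφd : ContDiff ℝ 2 φd)
    (hφper : ∀ (x : Fin n → ℝ) (z : Fin n → ℤ), φ (x + fun i => (z i : ℝ)) = φ x)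
    (hφdper : ∀ (x : Fin n → ℝ) (z : Fin n → ℤ), φd (x + fun i => (z i : ℝ)) = φd x)
    (hφpos : ∀ x, 0 < φ x) (hφdpos : ∀ x, 0 < φd x)
    (lam lamd : ℝ)
    (hdirect : ∀ x, vdiv (fun y i => Pe * v y i * φ y - vgrad φ y i) x = lam * φ x)
    (hadj : ∀ x,
      -Pe * (∑ i, v x i * vgrad φd x i) - vdiv (vgrad φd) x = lamd * φd x) :
    lam = lamd := by
  have hvi : ∀ i, ContDiff ℝ 1 (fun x => v x i) := fun i => (contDiff_pi.1 hv) i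
  have hJ : ∀ i, ContDiff ℝ 1 (fun x => Pe * v x i * φ x - vgrad φ x i) := fun i =>
    ((contDiff_const.mul (hvi i)).mul (hφ.of_le (by norm_num))).sub (contDiff_vgrad_apply hφ i)
  have hG : ∀ i, ContDiff ℝ 1
      (fun x => (Pe * v x i * φ x - vgrad φ x i) * φd x + φ x * vgrad φd x i) := fun i =>
    ((hJ i).mul (hφd.of_le (by norm_num))).add
      ((hφ.of_le (by norm_num)).mul (contDiff_vgrad_apply hφd i))
  have hdiv : ∀ x, vdiv (fun y i =>
      (Pe * v y i * φ y - vgrad φ y i) * φd y + φ y * vgrad φd y i) x =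
        (lam - lamd) * (φ x * φd x) := by
    intro x
    have h := vdiv_flux_mul_add (J := fun y i => Pe * v y i * φ y - vgrad φ y i) hJ hφ hφd x
    rw [h, hdirect x]
    have hsum : ∑ i, (Pe * v x i * φ x - vgrad φ x i + vgrad φ x i) * vgrad φd x i =
        Pe * φ x * ∑ i, v x i * vgrad φd x i := by
      rw [Finset.mul_sum]
      exact Finset.sum_congr rfl fun i _ => by ring
    rw [hsum]
    linear_combination -φ x * hadj x
  have hint := integral_vdiv_eq_zero hG (fun x z => by
    funext i
    simp only [hvper, hφper, hφdper, vgrad_periodic hφper, vgrad_periodic hφdper])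
  simp only [hdiv] at hint
  rw [integral_const_mul] at hint
  have hpos : 0 < ∫ x in Icc (0 : Fin n → ℝ) 1, φ x * φd x := by
    have hc : Continuous fun x => φ x * φd x := hφ.continuous.mul hφd.continuous
    have hsupp : Function.support (fun x => φ x * φd x) = univ :=
      eq_univ_of_forall fun x => (mul_pos (hφpos x) (hφdpos x)).ne'
    rw [setIntegral_pos_iff_support_of_nonneg_ae
      (ae_of_all _ fun x => (mul_pos (hφpos x) (hφdpos x)).le)
      (hc.continuousOn.integrableOn_compact isCompact_Icc), hsupp, univ_inter,
      Real.volume_Icc_pi]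
    simp
  exact sub_eq_zero.1 ((mul_eq_zero.1 hint).resolve_right hpos.ne')
end
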